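/- arXiv:2305.15327 — 3 statements merged into one kernel-verified Lean document; each statement's English description precedes it below -/
import Mathlib

section
/- The monoidal fibrant replacement P preserves cofibrations: For any morphism φ : X → Y of retractive spaces over B that is an f-cofibration (respectively, an h-cofibration), the induced morphism Pφ : PX → PY of retractive spaces over B is an f-cofibration (respectively, an h-cofibration). -/
/-!
Both claims follow from one stronger fact: if `φ` is an h-cofibration, then `Pφ` is an
f-cofibration.

A retraction `r` for the closed embedding `φ` yields Strøm data (`exists_strom_data`): a homotopy
`H : Y × I → Y` starting at the identity and a function `u : Y → I` vanishing on `φ(X)`, such that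
`H (y, u y) ∈ φ(X)` as soon as `u y < 1`. Stopping the homotopy at time `u y` gives the retraction
`(y, t) ↦ (H (y, ℓ), t - ℓ)` with `ℓ = min t (u y)`.

It does not respect the projections to `B`, but on `Y ×_B C(I, B)` this is repaired by moving the
path along: a point `(y, γ)` is sent to `H (y, ℓ)` together with the Moore concatenation of the
reversed track `s ↦ p (H (y, ℓ - s))` of length `ℓ` and of `γ`, linearly rescaled to length `1`
(`pathFun`). The end point of the path is unchanged, so the result is fibrewise over `B`. Since
`ℓ = 0` over `φ(X)`, where the new path is `γ` itself, the construction is compatible with the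
gluing along the section and descends to `PY × I`.

That `Pφ` is a closed embedding follows from the description of equality in the quotient
(`Pmk_eq_iff`): every point of `Y ×_B C(I, B)` whose class lies in the image of `Pφ` comes from
`X ×_B C(I, B)`, because the section of `Y` factors through `φ`.
-/

/-!
Statement 3: Pushout-products of cofibrations under the external smash product.
-/

open unitInterval Topology

/-- A retractive space over `B`: a total space with a section and a projection. -/
structure RSp (B : Type) [TopologicalSpace B] : Type 1 where
  carrier : Type
  [topology : TopologicalSpace carrier]
  sec : B → carrier
  proj : carrier → B
  continuous_sec : Continuous sec
  continuous_proj : Continuous proj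
  proj_sec : ∀ b, proj (sec b) = b

attribute [instance] RSp.topology

/-- `j : X → Y` is an h-cofibration: a closed embedding with the homotopy extension
property, i.e. `(X × I) ∪_{X × {0}} (Y × {0}) → Y × I` admits a continuous retraction;
equivalently (since `j` is a closed embedding) there is a continuous map `r : Y × I → Y × I`
fixing the image of the mapping cylinder pointwise and with range inside it. -/
def IsHCofibration {X Y : Type} [TopologicalSpace X] [TopologicalSpace Y] (j : X → Y) : Prop :=
  IsClosedEmbedding j ∧
    ∃ r : Y × I → Y × I, Continuous r ∧
      (∀ p : Y × I, p.1 ∈ Set.range j ∨ p.2 = 0 → r p = p) ∧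
      (∀ p : Y × I, (r p).1 ∈ Set.range j ∨ (r p).2 = 0)

/-- `j : X → Y` is an f-cofibration over `B` (w.r.t. the projection `pY : Y → B`):
a closed embedding with the fiberwise homotopy extension property, the retraction
commuting with the projections to `B`. -/
def IsFCofibration {X Y B : Type} [TopologicalSpace X] [TopologicalSpace Y] [TopologicalSpace B]
    (pY : Y → B) (j : X → Y) : Prop :=
  IsClosedEmbedding j ∧
    ∃ r : Y × I → Y × I, Continuous r ∧
      (∀ p : Y × I, p.1 ∈ Set.range j ∨ p.2 = 0 → r p = p) ∧
      (∀ p : Y × I, (r p).1 ∈ Set.range j ∨ (r p).2 = 0) ∧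
      (∀ p : Y × I, pY (r p).1 = pY p.1)


section PConstruction

variable {B : Type} [TopologicalSpace B]

/-- The fiber product `X ×_{p_X, ev₀} C([0,1], B)`. -/
def PMid (X : RSp B) : Type := {q : X.carrier × C(I, B) // X.proj q.1 = q.2 0}

instance (X : RSp B) : TopologicalSpace (PMid X) :=
  inferInstanceAs (TopologicalSpace {q : X.carrier × C(I, B) // X.proj q.1 = q.2 0})

/-- The identifications defining `PX` as the pushout in `Top` of
`B ← C([0,1], B) → X ×_{p_X, ev₀} C([0,1], B)`, where the left map is evaluation at `1`
and the right map sends `γ` to `(i_X (γ 0), γ)`. -/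
inductive PRel (X : RSp B) : (B ⊕ PMid X) → (B ⊕ PMid X) → Prop
  | mk (γ : C(I, B)) :
      PRel X (.inl (γ 1)) (.inr ⟨(X.sec (γ 0), γ), by rw [X.proj_sec]⟩)

/-- Total space of the monoidal fibrant replacement `PX`. -/
def PTotal (X : RSp B) : Type := Quot (PRel X)

instance (X : RSp B) : TopologicalSpace (PTotal X) :=
  inferInstanceAs (TopologicalSpace (Quot _))

/-- Projection `PX → B`, induced by evaluation at `1` and the identity of `B`. -/
def Pproj (X : RSp B) : PTotal X → B :=
  Quot.lift (Sum.elim id fun q => q.1.2 1) (by rintro _ _ ⟨γ⟩; rfl)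

/-- Section `B → PX`. -/
def Psec (X : RSp B) : B → PTotal X := fun b => Quot.mk _ (.inl b)

/-- Functoriality of `P` on morphisms of retractive spaces over `B`. -/
def Pmap {X Y : RSp B} (φ : X.carrier → Y.carrier)
    (hs : ∀ b, φ (X.sec b) = Y.sec b) (hp : ∀ x, Y.proj (φ x) = X.proj x) :
    PTotal X → PTotal Y :=
  Quot.map
    (Sum.map id fun q => ⟨(φ q.1.1, q.1.2), by rw [hp]; exact q.2⟩)
    (by
      rintro _ _ ⟨γ⟩
      show PRel Y (.inl (γ 1)) (.inr ⟨(φ (X.sec (γ 0)), γ), _⟩)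
      have h : (⟨(φ (X.sec (γ 0)), γ), by rw [hp, X.proj_sec]⟩ : PMid Y)
          = ⟨(Y.sec (γ 0), γ), by rw [Y.proj_sec]⟩ := Subtype.ext (by simp [hs])
      rw [h]
      exact PRel.mk γ)

end PConstruction

/-! ### Strøm data of a closed cofibration -/

section Strom

variable {Y : Type} [TopologicalSpace Y]

/-- A retraction of `Y × I` onto `A × I ∪ Y × {0}` with `A` closed gives a homotopy `H` from the
identity and a function `u` vanishing on `A` such that the homotopy has reached `A` at time `u y`
whenever `u y < 1`. -/
lemma exists_strom_data {A : Set Y} (hA : IsClosed A) (r : Y × I → Y × I) (hr : Continuous r)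
    (hfix : ∀ p : Y × I, p.1 ∈ A ∨ p.2 = 0 → r p = p)
    (hran : ∀ p : Y × I, (r p).1 ∈ A ∨ (r p).2 = 0) :
    ∃ (H : Y × I → Y) (u : Y → I), Continuous H ∧ Continuous u ∧ (∀ y, H (y, 0) = y) ∧
      (∀ y ∈ A, u y = 0) ∧ (∀ y, u y < 1 → H (y, u y) ∈ A) := by
  -- `v y` is the largest delay `s - r₂ (y, s)` of the second coordinate of the retraction.
  set f : Y → I → ℝ := fun y s => (s : ℝ) - (r (y, s)).2 with hf
  have hfc : Continuous (Function.uncurry f) := by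
    simp only [hf, Function.uncurry_def]; fun_prop
  set v : Y → ℝ := fun y => sSup (f y '' Set.univ) with hv
  have hvc : Continuous v := isCompact_univ.continuous_sSup hfc
  have hle : ∀ y s, f y s ≤ v y := fun y s => by
    refine le_csSup ?_ ⟨s, trivial, rfl⟩
    exact (isCompact_univ.image (hfc.comp (Continuous.prodMk_right y))).bddAbove
  refine ⟨fun p => (r p).1, fun y => Set.projIcc 0 1 zero_le_one (v y), by fun_prop,
    continuous_projIcc.comp hvc, fun y => ?_, fun y hy => ?_, fun y hy => ?_⟩
  · simp [hfix (y, 0) (Or.inr rfl)]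
  · have : f y = fun _ => 0 := by
      funext s
      simp [hf, hfix (y, s) (Or.inl hy)]
    have hv0 : v y = 0 := by simp [hv, this]
    simp [hv0]
  · set w := Set.projIcc (0 : ℝ) 1 zero_le_one (v y) with hw
    have key : ∀ s ∈ Set.Ioi w, (r (y, s)).1 ∈ A := by
      intro s hs
      refine (hran (y, s)).resolve_right fun h0 => ?_
      have h1 := hle y s
      simp only [hf, h0] at h1
      have h2 : s ≤ w := by
        rw [← Set.projIcc_val zero_le_one s]
        exact Set.monotone_projIcc _ (by simpa using h1)
      exact absurd hs (not_lt.mpr h2)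
    have hcl : w ∈ closure (Set.Ioi w) := by
      have hne : (Set.Ioi w).Nonempty := ⟨1, hy⟩
      rw [closure_Ioi' hne]
      exact Set.self_mem_Ici
    have := map_mem_closure (f := fun s : I => (r (y, s)).1) (by fun_prop) hcl key
    rwa [hA.closure_eq] at this

end Strom

/-! ### Equality of points of `PX` -/

section PLemmas

variable {B : Type} [TopologicalSpace B]

/-- The quotient map `B ⊔ (X ×_B C(I, B)) → PX`. -/
def Pmk (X : RSp B) : B ⊕ PMid X → PTotal X := Quot.mk (PRel X)

lemma continuous_Pmk (X : RSp B) : Continuous (Pmk X) := continuous_quot_mk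

open Classical in
/-- Canonical representative of the class of a point in `PX`: points `(i_X (γ 0), γ)` are replaced
by `γ 1 ∈ B`. -/
noncomputable def Pnf (X : RSp B) : B ⊕ PMid X → B ⊕ PMid X :=
  Sum.elim Sum.inl fun q => if q.1.1 = X.sec (q.1.2 0) then .inl (q.1.2 1) else .inr q

lemma Pnf_of_sec (X : RSp B) (q : PMid X) (h : q.1.1 = X.sec (q.1.2 0)) :
    Pnf X (.inr q) = .inl (q.1.2 1) := if_pos h

lemma Pnf_of_not_sec (X : RSp B) (q : PMid X) (h : ¬ q.1.1 = X.sec (q.1.2 0)) :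
    Pnf X (.inr q) = .inr q := if_neg h

lemma Pmk_inr_of_sec (X : RSp B) (q : PMid X) (h : q.1.1 = X.sec (q.1.2 0)) :
    Pmk X (.inr q) = Pmk X (.inl (q.1.2 1)) := by
  obtain ⟨⟨x, γ⟩, hq⟩ := q
  simp only at h
  subst h
  exact (Quot.sound (PRel.mk γ)).symm

lemma Pmk_Pnf (X : RSp B) (a : B ⊕ PMid X) : Pmk X (Pnf X a) = Pmk X a := by
  rcases a with b | q
  · rfl
  · by_cases h : q.1.1 = X.sec (q.1.2 0)
    · rw [Pnf_of_sec X q h, Pmk_inr_of_sec X q h]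
    · rw [Pnf_of_not_sec X q h]

lemma Pmk_eq_iff (X : RSp B) (a b : B ⊕ PMid X) : Pmk X a = Pmk X b ↔ Pnf X a = Pnf X b := by
  constructor
  · intro h
    have hl : ∀ a b, PRel X a b → Pnf X a = Pnf X b := by
      rintro _ _ ⟨γ⟩
      exact (Pnf_of_sec X ⟨(X.sec (γ 0), γ), _⟩ rfl).symm
    exact congrArg (Quot.lift (Pnf X) hl) h
  · intro h
    rw [← Pmk_Pnf X a, h, Pmk_Pnf]

/-! ### `Pφ` is a closed embedding -/

variable {X Y : RSp B} (φ : X.carrier → Y.carrier)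
    (hs : ∀ b, φ (X.sec b) = Y.sec b) (hp : ∀ x, Y.proj (φ x) = X.proj x)

/-- The map `X ×_B C(I, B) → Y ×_B C(I, B)` induced by `φ`. -/
def midMap (hp : ∀ x, Y.proj (φ x) = X.proj x) (q : PMid X) : PMid Y :=
  ⟨(φ q.1.1, q.1.2), by rw [hp]; exact q.2⟩

lemma Pmap_inl (b : B) : Pmap φ hs hp (Pmk X (.inl b)) = Pmk Y (.inl b) := rfl

lemma continuous_midMap (hφ : Continuous φ) : Continuous (midMap φ hp) := by
  unfold midMap
  exact Continuous.subtype_mk (by fun_prop) _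

lemma isClosedMap_midMap (hφ : IsClosedEmbedding φ) : IsClosedMap (midMap φ hp) := by
  have h1 : IsClosedEmbedding (Prod.map φ (id : C(I, B) → C(I, B))) :=
    hφ.prodMap IsClosedEmbedding.id
  intro C hC
  obtain ⟨D, hD, rfl⟩ := isClosed_induced_iff.1 hC
  refine isClosed_induced_iff.2 ⟨_, h1.isClosedMap D hD, ?_⟩
  ext q'
  constructor
  · rintro ⟨⟨x, γ⟩, hd, h⟩
    refine ⟨⟨(x, γ), ?_⟩, hd, Subtype.ext h⟩
    have h2 := q'.2
    rw [← h] at h2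
    rw [← hp]
    exact h2
  · rintro ⟨q, hq, rfl⟩
    exact ⟨q.1, hq, rfl⟩

lemma Pmap_injective (hφ : Function.Injective φ) : Function.Injective (Pmap φ hs hp) := by
  -- As `φ` is injective, it detects the section, so it commutes with canonical representatives.
  have hsec : ∀ q : PMid X, φ q.1.1 = Y.sec (q.1.2 0) ↔ q.1.1 = X.sec (q.1.2 0) := fun q => by
    rw [← hs]; exact hφ.eq_iff
  have hmid : Function.Injective (midMap φ hp) := by
    intro q q' h
    have h' := congrArg Subtype.val h
    simp only [midMap, Prod.mk.injEq] at h'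
    exact Subtype.ext (Prod.ext (hφ h'.1) h'.2)
  have hnf : ∀ a : B ⊕ PMid X,
      Pnf Y (Sum.map id (midMap φ hp) a) = Sum.map id (midMap φ hp) (Pnf X a) := by
    rintro (b | q)
    · rfl
    · by_cases h : q.1.1 = X.sec (q.1.2 0)
      · rw [Pnf_of_sec X q h]
        exact Pnf_of_sec Y (midMap φ hp q) ((hsec q).2 h)
      · rw [Pnf_of_not_sec X q h]
        exact Pnf_of_not_sec Y (midMap φ hp q) (mt (hsec q).1 h)
  rintro ⟨a⟩ ⟨b⟩ h
  have h2 : Pnf Y (Sum.map id (midMap φ hp) a) = Pnf Y (Sum.map id (midMap φ hp) b) :=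
    (Pmk_eq_iff Y _ _).1 h
  rw [hnf, hnf] at h2
  exact (Pmk_eq_iff X a b).2 (Function.injective_id.sumMap hmid h2)

/-- Every point of `Y ×_B C(I, B)` whose class is in the image of `Pφ` comes from
`X ×_B C(I, B)`. -/
lemma exists_mid_of_Pmap_eq (hφ : Function.Injective φ) (c : PTotal X) (q' : PMid Y)
    (h : Pmap φ hs hp c = Pmk Y (.inr q')) :
    ∃ q, midMap φ hp q = q' ∧ Pmk X (.inr q) = c := by
  suffices ∃ q, midMap φ hp q = q' by
    obtain ⟨q, rfl⟩ := this
    exact ⟨q, rfl, (Pmap_injective φ hs hp hφ h).symm⟩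
  by_cases hq : q'.1.1 = Y.sec (q'.1.2 0)
  · refine ⟨⟨(X.sec (q'.1.2 0), q'.1.2), X.proj_sec _⟩, Subtype.ext (Prod.ext ?_ rfl)⟩
    simp [midMap, hs, hq]
  · obtain ⟨b | q⟩ := c
    · have h2 : Pnf Y (.inl b) = Pnf Y (.inr q') := (Pmk_eq_iff Y _ _).1 h
      rw [Pnf_of_not_sec Y q' hq] at h2
      exact absurd h2 Sum.inl_ne_inr
    · have h2 : Pnf Y (.inr (midMap φ hp q)) = Pnf Y (.inr q') := (Pmk_eq_iff Y _ _).1 h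
      refine ⟨q, ?_⟩
      by_cases hq2 : (midMap φ hp q).1.1 = Y.sec ((midMap φ hp q).1.2 0)
      · rw [Pnf_of_not_sec Y q' hq, Pnf_of_sec Y _ hq2] at h2
        exact absurd h2 Sum.inl_ne_inr
      · rw [Pnf_of_not_sec Y q' hq, Pnf_of_not_sec Y _ hq2] at h2
        exact Sum.inr_injective h2

lemma isClosed_PTotal_iff (X : RSp B) (C : Set (PTotal X)) :
    IsClosed C ↔ IsClosed {b | Pmk X (.inl b) ∈ C} ∧ IsClosed {q | Pmk X (.inr q) ∈ C} := by
  have h : IsQuotientMap (Pmk X) := isQuotientMap_quot_mk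
  rw [← h.isClosed_preimage, isClosed_sum_iff]
  rfl

lemma isClosedEmbedding_Pmap (hφ : IsClosedEmbedding φ) :
    IsClosedEmbedding (Pmap φ hs hp) := by
  refine .of_continuous_injective_isClosedMap ?_ (Pmap_injective φ hs hp hφ.injective) ?_
  · refine continuous_quot_lift _ ((continuous_Pmk Y).comp ?_)
    exact continuous_id.sumMap (continuous_midMap φ hp hφ.continuous)
  · intro C hC
    rw [isClosed_PTotal_iff] at hC ⊢
    constructor
    · convert hC.1 using 1
      ext b
      constructor
      · rintro ⟨c, hc, h⟩
        rw [← Pmap_inl φ hs hp] at h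
        have := Pmap_injective φ hs hp hφ.injective h
        rwa [this] at hc
      · intro h
        exact ⟨_, h, rfl⟩
    · convert isClosedMap_midMap φ hp hφ _ hC.2 using 1
      ext q'
      constructor
      · rintro ⟨c, hc, h⟩
        obtain ⟨q, hq, rfl⟩ := exists_mid_of_Pmap_eq φ hs hp hφ.injective c q' h
        exact ⟨q, hc, hq⟩
      · rintro ⟨q, hq, rfl⟩
        exact ⟨_, hq, rfl⟩

/-! ### Moving paths along the homotopy -/

/-- The Moore concatenation of the reversed track `s ↦ p (H (y, ℓ - s))`, `0 ≤ s ≤ ℓ`, and of the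
path `γ`, linearly rescaled from length `1 + ℓ` to length `1` and evaluated at `s`. -/
noncomputable def pathFun (Y : RSp B) (H : Y.carrier × I → Y.carrier)
    (z : (PMid Y × I) × I) : B :=
  if (z.2 : ℝ) * (1 + z.1.2) ≤ z.1.2 then
    Y.proj (H (z.1.1.1.1, Set.projIcc 0 1 zero_le_one ((z.1.2 : ℝ) - z.2 * (1 + z.1.2))))
  else z.1.1.1.2 (Set.projIcc 0 1 zero_le_one ((z.2 : ℝ) * (1 + z.1.2) - z.1.2))

lemma continuous_pathFun (Y : RSp B) (H : Y.carrier × I → Y.carrier) (hH : Continuous H)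
    (hH0 : ∀ y, H (y, 0) = y) : Continuous (pathFun Y H) := by
  have hq : Continuous fun z : (PMid Y × I) × I => z.1.1.1 :=
    continuous_subtype_val.comp (by fun_prop)
  have hproj := Y.continuous_proj
  unfold pathFun
  refine Continuous.if_le ?_ ?_ (by fun_prop) (by fun_prop) ?_
  · refine hproj.comp (hH.comp ?_)
    exact (continuous_fst.comp hq).prodMk (continuous_projIcc.comp (by fun_prop))
  · have h1 : Continuous fun z : (PMid Y × I) × I => z.1.1.1.2 := continuous_snd.comp hq
    have h2 : Continuous fun z : (PMid Y × I) × I =>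
        Set.projIcc (0 : ℝ) 1 zero_le_one ((z.2 : ℝ) * (1 + z.1.2) - z.1.2) :=
      continuous_projIcc.comp (by fun_prop)
    exact h1.eval h2
  · intro z hz
    have h0 : (Set.projIcc (0 : ℝ) 1 zero_le_one 0) = 0 := Set.projIcc_left _
    rw [hz, sub_self, h0, hH0]
    exact z.1.1.2

lemma pathFun_zero (Y : RSp B) (H : Y.carrier × I → Y.carrier) (q : PMid Y) (l : I) :
    pathFun Y H ((q, l), 0) = Y.proj (H (q.1.1, l)) := by
  simp [pathFun, l.2.1]

lemma pathFun_one (Y : RSp B) (H : Y.carrier × I → Y.carrier) (q : PMid Y) (l : I) :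
    pathFun Y H ((q, l), 1) = q.1.2 1 := by
  simp [pathFun]

lemma pathFun_of_length_zero (Y : RSp B) (H : Y.carrier × I → Y.carrier)
    (hH0 : ∀ y, H (y, 0) = y) (q : PMid Y) (s : I) :
    pathFun Y H ((q, 0), s) = q.1.2 s := by
  by_cases h : s = 0
  · subst h
    rw [pathFun_zero, hH0]
    exact q.2
  · have h' : ¬ (s : ℝ) ≤ 0 := fun h2 => h (Subtype.ext (le_antisymm h2 s.2.1))
    simp [pathFun, h']

/-- The map `Y ×_B C(I, B) × I → Y ×_B C(I, B)` moving `y` to `H (y, ℓ)` and prolonging the path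
by the reversed track of `y`. -/
noncomputable def midMove (Y : RSp B) (H : Y.carrier × I → Y.carrier) (hH : Continuous H)
    (hH0 : ∀ y, H (y, 0) = y) (z : PMid Y × I) : PMid Y :=
  ⟨(H (z.1.1.1, z.2), ContinuousMap.curry ⟨pathFun Y H, continuous_pathFun Y H hH hH0⟩ z),
    (pathFun_zero Y H z.1 z.2).symm⟩

lemma continuous_midMove (Y : RSp B) (H : Y.carrier × I → Y.carrier) (hH : Continuous H)
    (hH0 : ∀ y, H (y, 0) = y) : Continuous (midMove Y H hH hH0) := by
  have hq : Continuous fun z : PMid Y × I => z.1.1 := continuous_subtype_val.comp (by fun_prop)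
  refine Continuous.subtype_mk ?_ _
  exact (hH.comp ((continuous_fst.comp hq).prodMk continuous_snd)).prodMk
    (ContinuousMap.continuous _)

lemma midMove_zero (Y : RSp B) (H : Y.carrier × I → Y.carrier) (hH : Continuous H)
    (hH0 : ∀ y, H (y, 0) = y) (q : PMid Y) : midMove Y H hH hH0 (q, 0) = q := by
  refine Subtype.ext (Prod.ext (hH0 _) ?_)
  ext s
  exact pathFun_of_length_zero Y H hH0 q s

/-! ### The fibrewise retraction of `PY × I` -/

/-- The stronger fact behind both cases: `P` turns h-cofibrations into f-cofibrations. -/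
lemma isFCofibration_Pmap (hφ : IsHCofibration φ) :
    IsFCofibration (Pproj Y) (Pmap φ hs hp) := by
  obtain ⟨hemb, r, hr, hfix, hran⟩ := hφ
  refine ⟨isClosedEmbedding_Pmap φ hs hp hemb, ?_⟩
  obtain ⟨H, u, hH, hu, hH0, huA, hHA⟩ :=
    exists_strom_data hemb.isClosed_range r hr hfix hran
  set l : PMid Y × I → I := fun z => min z.2 (u z.1.1.1) with hl
  have hlc : Continuous l :=
    continuous_snd.min (hu.comp (continuous_fst.comp
      (continuous_subtype_val.comp continuous_fst)))
  set g : PMid Y × I → PTotal Y × I := fun z =>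
    (Pmk Y (.inr (midMove Y H hH hH0 (z.1, l z))),
      Set.projIcc 0 1 zero_le_one ((z.2 : ℝ) - l z)) with hg
  have hgc : Continuous g := by
    refine Continuous.prodMk ?_ (continuous_projIcc.comp (by fun_prop))
    exact (continuous_Pmk Y).comp (continuous_inr.comp
      ((continuous_midMove Y H hH hH0).comp (continuous_fst.prodMk hlc)))
  have hg0 : ∀ z, l z = 0 → g z = (Pmk Y (.inr z.1), z.2) := fun z hz => by
    simp [hg, hz, midMove_zero]
  have hlA : ∀ z : PMid Y × I, z.1.1.1 ∈ Set.range φ → l z = 0 := fun z hz => by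
    have h0 : (0 : I) ≤ z.2 := z.2.2.1
    simp [hl, huA _ hz, h0]
  -- The retraction is glued from its adjoint `PY → C(I, PY × I)`, so that only the universal
  -- property of the quotient `PY` itself is needed.
  let k : C(B × I, PTotal Y × I) := ⟨fun z => (Pmk Y (.inl z.1), z.2),
    ((continuous_Pmk Y).comp (continuous_inl.comp continuous_fst)).prodMk continuous_snd⟩
  let e : B ⊕ PMid Y → C(I, PTotal Y × I) :=
    Sum.elim k.curry (ContinuousMap.curry ⟨g, hgc⟩)
  have hec : Continuous e := k.curry.continuous.sumElim (ContinuousMap.continuous _)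
  have herel : ∀ a b, PRel Y a b → e a = e b := by
    rintro _ _ ⟨γ⟩
    ext1 t
    refine Eq.trans ?_ (hg0 (⟨(Y.sec (γ 0), γ), _⟩, t) (hlA _ ⟨X.sec (γ 0), hs _⟩)).symm
    exact Prod.ext (Quot.sound (PRel.mk γ)) rfl
  let E : PTotal Y → C(I, PTotal Y × I) := Quot.lift e herel
  have hEc : Continuous E := continuous_quot_lift herel hec
  refine ⟨fun p => E p.1 p.2, (hEc.comp continuous_fst).eval continuous_snd, ?_, ?_, ?_⟩
  · rintro ⟨⟨b | q⟩, t⟩ h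
    · rfl
    · refine hg0 (q, t) ?_
      rcases h with ⟨c, hc⟩ | h
      · obtain ⟨q0, rfl, -⟩ := exists_mid_of_Pmap_eq φ hs hp hemb.injective c q hc
        exact hlA _ ⟨q0.1.1, rfl⟩
      · have h' : t = 0 := h
        have h0 : (0 : I) ≤ u q.1.1 := (u q.1.1).2.1
        simp [hl, h', h0]
  · rintro ⟨⟨b | q⟩, t⟩
    · exact Or.inl ⟨Pmk X (.inl b), rfl⟩
    · change (g (q, t)).1 ∈ _ ∨ (g (q, t)).2 = 0
      by_cases h : t ≤ u q.1.1
      · right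
        simp [hg, hl, h]
      · left
        have h1 : l (q, t) = u q.1.1 := min_eq_right (not_le.1 h).le
        obtain ⟨x, hx⟩ := hHA q.1.1 (lt_of_lt_of_le (not_le.1 h) t.2.2)
        set m := midMove Y H hH hH0 (q, l (q, t)) with hm
        have hmx : φ x = m.1.1 := by rw [hx, hm, h1]; rfl
        refine ⟨Pmk X (.inr ⟨(x, m.1.2), ?_⟩), ?_⟩
        · rw [← hp, hmx]; exact m.2
        · exact congrArg (fun q => Pmk Y (.inr q)) (Subtype.ext (Prod.ext hmx rfl))
  · rintro ⟨⟨b | q⟩, t⟩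
    · rfl
    · exact pathFun_one Y H q _

end PLemmas

/-- The monoidal fibrant replacement `P` preserves cofibrations: if
`φ : X → Y` is a morphism of retractive spaces over `B` which is an f-cofibration
(respectively an h-cofibration), then `Pφ : PX → PY` is an f-cofibration
(respectively an h-cofibration). -/
theorem P_preserves_cofibrations
    {B : Type} [TopologicalSpace B] (X Y : RSp B)
    (φ : X.carrier → Y.carrier) (hφc : Continuous φ)
    (hs : ∀ b, φ (X.sec b) = Y.sec b) (hp : ∀ x, Y.proj (φ x) = X.proj x) :
    (IsFCofibration Y.proj φ → IsFCofibration (Pproj Y) (Pmap φ hs hp)) ∧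
    (IsHCofibration φ → IsHCofibration (Pmap φ hs hp)) := by
  refine ⟨fun h => isFCofibration_Pmap φ hs hp ?_, fun h => ?_⟩
  · obtain ⟨h1, r, hr, h2, h3, -⟩ := h
    exact ⟨h1, r, hr, h2, h3⟩
  · obtain ⟨h1, r, hr, h2, h3, -⟩ := isFCofibration_Pmap φ hs hp h
    exact ⟨h1, r, hr, h2, h3⟩
end

section
/- External mapping spaces out of a compact space preserve f-cofibrations: Let Y be a retractive space over B whose total space is compact Hausdorff, and let h : M → Z be a morphism of retractive spaces over A × B that is an f-cofibration over A × B. Then the induced map of external mapping spaces Map̄_B(Y, M) → Map̄_B(Y, Z) is an f-cofibration of retractive spaces over A. -/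
/-!
Let `r` be the fiberwise retraction for `h : M → Z`. Applying it pointwise to a map `u : Y → Z` at
time `t` gives the map `y ↦ (r (u y, t)).1`, which depends continuously on `(u, t)` because `Y` is
compact Hausdorff, and which lies in the same fiber and respects the sections because `r` is
fiberwise and fixes the image of `h`. The time coordinates `(r (u y, t)).2` depend on `y`; they are
replaced by their infimum over `Y` (capped by `t`), continuous in `(u, t)` by compactness of `Y`.
If this infimum is positive, then every `(r (u y, t)).2` is positive, so every `(r (u y, t)).1` lies
in the image of `h`, and the new map lifts to `M`: this is the required retraction. The lifting uses
`extMap_range`: the image of the induced map consists of the maps with values in the image of `h`,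
which also shows that this image is closed.
-/


/-!
Statement 3: Pushout-products of cofibrations under the external smash product.
-/

open unitInterval Topology

section ExtMap

variable {A B : Type} [TopologicalSpace A] [TopologicalSpace B]

/-- Total space of the external mapping space `Map̄_B(Y, Z)` for `Y` retractive over `B`
and `Z` retractive over `A × B`: the subspace of `A × C(Y, Z)` (compact-open topology)
of pairs `(a, u)` with `p_Z ∘ u = (const_a, p_Y)` and `u ∘ i_Y = i_Z ∘ (const_a, id)`. -/
def ExtMapTotal (Y : RSp B) (Z : RSp (A × B)) : Type :=
  {w : A × C(Y.carrier, Z.carrier) //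
    (∀ y : Y.carrier, Z.proj (w.2 y) = (w.1, Y.proj y)) ∧
    (∀ b : B, w.2 (Y.sec b) = Z.sec (w.1, b))}

instance (Y : RSp B) (Z : RSp (A × B)) : TopologicalSpace (ExtMapTotal Y Z) :=
  inferInstanceAs (TopologicalSpace {w : A × C(Y.carrier, Z.carrier) //
    (∀ y : Y.carrier, Z.proj (w.2 y) = (w.1, Y.proj y)) ∧
    (∀ b : B, w.2 (Y.sec b) = Z.sec (w.1, b))})

/-- Projection of the external mapping space to `A`. -/
def extMapProj (Y : RSp B) (Z : RSp (A × B)) : ExtMapTotal Y Z → A := fun w => w.1.1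

/-- The map `Map̄_B(Y, M) → Map̄_B(Y, Z)` induced by a morphism `h : M → Z` of retractive
spaces over `A × B` (postcomposition). -/
def extMapInduced {Y : RSp B} {M Z : RSp (A × B)}
    (h : M.carrier → Z.carrier) (hc : Continuous h)
    (hs : ∀ p, h (M.sec p) = Z.sec p) (hp : ∀ m, Z.proj (h m) = M.proj m) :
    ExtMapTotal Y M → ExtMapTotal Y Z :=
  fun w =>
    ⟨(w.1.1, (⟨h, hc⟩ : C(M.carrier, Z.carrier)).comp w.1.2),
      ⟨fun y => by simp [hp, w.2.1 y], fun b => by simp [w.2.2 b, hs]⟩⟩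

end ExtMap

section

variable {A B : Type} [TopologicalSpace A] [TopologicalSpace B]

/-- Joint continuity of evaluation on the external mapping space; local compactness of `Y` is what
makes it hold for the compact-open topology. -/
lemma extMap_continuous_eval (Y : RSp B) [CompactSpace Y.carrier] [T2Space Y.carrier]
    (Z : RSp (A × B)) :
    Continuous fun q : ExtMapTotal Y Z × Y.carrier => q.1.1.2 q.2 := by
  have h1 : Continuous fun w : ExtMapTotal Y Z => w.1.2 :=
    continuous_snd.comp continuous_subtype_val
  exact (h1.comp continuous_fst).eval continuous_snd

lemma extMap_range {Y : RSp B} {M Z : RSp (A × B)}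
    (h : M.carrier → Z.carrier) (hc : Continuous h)
    (hs : ∀ p, h (M.sec p) = Z.sec p) (hp : ∀ m, Z.proj (h m) = M.proj m)
    (he : IsEmbedding h) :
    Set.range (extMapInduced (Y := Y) h hc hs hp) = {w | ∀ y, w.1.2 y ∈ Set.range h} := by
  ext w
  constructor
  · rintro ⟨v, rfl⟩ y
    exact ⟨v.1.2 y, rfl⟩
  · intro hw
    choose g hg using hw
    have hgc : Continuous g := by
      rw [he.isInducing.continuous_iff]
      have : h ∘ g = w.1.2 := funext hg
      rw [this]
      exact w.1.2.continuous
    refine ⟨⟨(w.1.1, ⟨g, hgc⟩), fun y => ?_, fun b => ?_⟩, ?_⟩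
    · change M.proj (g y) = _
      rw [← hp, hg]
      exact w.2.1 y
    · change g (Y.sec b) = _
      apply he.injective
      rw [hg, hs]
      exact w.2.2 b
    · apply Subtype.ext
      refine Prod.ext rfl ?_
      ext y
      exact hg y

lemma extMap_isClosedEmbedding {Y : RSp B} [CompactSpace Y.carrier] [T2Space Y.carrier]
    {M Z : RSp (A × B)}
    (h : M.carrier → Z.carrier) (hc : Continuous h)
    (hs : ∀ p, h (M.sec p) = Z.sec p) (hp : ∀ m, Z.proj (h m) = M.proj m)
    (he : IsClosedEmbedding h) :
    IsClosedEmbedding (extMapInduced (Y := Y) h hc hs hp) := by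
  refine ⟨?_, ?_⟩
  · have h1 : IsEmbedding (Prod.map (id : A → A)
        (fun u : C(Y.carrier, M.carrier) => (⟨h, hc⟩ : C(M.carrier, Z.carrier)).comp u)) :=
      IsEmbedding.id.prodMap (ContinuousMap.isEmbedding_postcomp ⟨h, hc⟩ he.isEmbedding)
    have h2 : IsEmbedding (Subtype.val ∘ extMapInduced (Y := Y) h hc hs hp) :=
      h1.comp IsEmbedding.subtypeVal
    exact (IsEmbedding.of_comp_iff IsEmbedding.subtypeVal).1 h2
  · rw [extMap_range h hc hs hp he.isEmbedding, Set.ofPred_forall]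
    refine isClosed_iInter fun y => he.isClosed_range.preimage ?_
    exact (extMap_continuous_eval Y Z).comp (Continuous.prodMk_left y)

end

/-- Let `Y` be a retractive space over `B` with compact Hausdorff total
space, and let `h : M → Z` be a morphism of retractive spaces over `A × B` which is an
f-cofibration over `A × B`.  Then the induced map of external mapping spaces
`Map̄_B(Y, M) → Map̄_B(Y, Z)` is an f-cofibration of retractive spaces over `A`. -/
theorem extMap_preserves_f_cofibrations
    {A B : Type} [TopologicalSpace A] [TopologicalSpace B]
    (Y : RSp B) [CompactSpace Y.carrier] [T2Space Y.carrier]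
    (M Z : RSp (A × B))
    (h : M.carrier → Z.carrier) (hc : Continuous h)
    (hs : ∀ p, h (M.sec p) = Z.sec p) (hp : ∀ m, Z.proj (h m) = M.proj m)
    (hf : IsFCofibration Z.proj h) :
    IsFCofibration (extMapProj Y Z) (extMapInduced h hc hs hp) := by
  obtain ⟨he, r, hr, hfix, hran, hproj⟩ := hf
  refine ⟨extMap_isClosedEmbedding h hc hs hp he, ?_⟩
  have hrange := extMap_range (Y := Y) h hc hs hp he.isEmbedding
  have hF : Continuous fun q : (ExtMapTotal Y Z × I) × Y.carrier =>
      r (q.1.1.1.2 q.2, q.1.2) := by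
    refine hr.comp (Continuous.prodMk ?_ (by fun_prop))
    exact (extMap_continuous_eval Y Z).comp
      (f := fun q : (ExtMapTotal Y Z × I) × Y.carrier => (q.1.1, q.2)) (by fun_prop)
  let G : ExtMapTotal Y Z × I → C(Y.carrier, Z.carrier) := fun p =>
    ⟨fun y => (r (p.1.1.2 y, p.2)).1,
      continuous_fst.comp (hF.comp (Continuous.prodMk_right p))⟩
  have hG : Continuous G :=
    ContinuousMap.continuous_of_continuous_uncurry _ (continuous_fst.comp hF)
  -- The cap by `p.2` matters only for empty `Y`, where the infimum is `1`.
  let m : ExtMapTotal Y Z × I → I := fun p =>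
    min p.2 (sInf ((fun y => (r (p.1.1.2 y, p.2)).2) '' Set.univ))
  have hm : Continuous m :=
    continuous_snd.min (IsCompact.continuous_sInf isCompact_univ (continuous_snd.comp hF))
  have hG1 : ∀ p : ExtMapTotal Y Z × I, ∀ y, Z.proj (G p y) = (p.1.1.1, Y.proj y) := by
    intro p y
    exact (hproj _).trans (p.1.2.1 y)
  have hG2 : ∀ p : ExtMapTotal Y Z × I, ∀ b, G p (Y.sec b) = Z.sec (p.1.1.1, b) := by
    intro p b
    change (r (p.1.1.2 (Y.sec b), p.2)).1 = _
    rw [p.1.2.2 b, hfix _ (Or.inl ⟨_, hs _⟩)]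
  refine ⟨fun p => (⟨(p.1.1.1, G p), hG1 p, hG2 p⟩, m p), ?_, ?_, ?_, fun p => rfl⟩
  · refine Continuous.prodMk (Continuous.subtype_mk (Continuous.prodMk ?_ hG) _) hm
    exact continuous_fst.comp (continuous_subtype_val.comp continuous_fst)
  · intro p hpp
    have key : ∀ y, r (p.1.1.2 y, p.2) = (p.1.1.2 y, p.2) := by
      intro y
      apply hfix
      rcases hpp with h1 | h1
      · rw [hrange] at h1
        exact Or.inl (h1 y)
      · exact Or.inr h1
    refine Prod.ext (Subtype.ext (Prod.ext rfl ?_)) ?_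
    · ext y
      exact congrArg Prod.fst (key y)
    · refine min_eq_left (le_sInf ?_)
      rintro _ ⟨y, -, rfl⟩
      exact (congrArg Prod.snd (key y)).ge
  · intro p
    by_cases h0 : m p = 0
    · exact Or.inr h0
    · left
      rw [hrange]
      intro y
      refine (hran (p.1.1.2 y, p.2)).resolve_right fun h1 => h0 ?_
      have h2 : m p ≤ (r (p.1.1.2 y, p.2)).2 :=
        (min_le_right _ _).trans (sInf_le ⟨y, Set.mem_univ _, rfl⟩)
      rw [h1] at h2
      exact le_antisymm h2 bot_le
end

section
/- Derived adjunction of a deformable adjunction: Let C and D be categories equipped with classes W_C and W_D of weak equivalences, each containing all identities and satisfying two-out-of-three. Let F : C ⥤ D and G : D ⥤ C with an adjunction F ⊣ G. Suppose F is left deformable: there are a full subcategory A_C of C, a functor Q : C ⥤ C landing in A_C, and a natural transformation q : Q ⟶ 𝟭_C with components in W_C, such that F sends morphisms of W_C between objects of A_C into W_D. Dually suppose G is right deformable via a full subcategory A_D of D, a functor R : D ⥤ D landing in A_D, and r : 𝟭_D ⟶ R with components in W_D, such that G sends morphisms of W_D between objects of A_D into W_C. Then F ∘ Q sends W_C into W_D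 and G ∘ R sends W_D into W_C, so they induce functors LF : C[W_C⁻¹] ⥤ D[W_D⁻¹] and RG : D[W_D⁻¹] ⥤ C[W_C⁻¹] on the localizations, and there exists an adjunction LF ⊣ RG. -/
/-!
The functor `LF` comes with a comparison `α : WC.Q ⋙ LF ⟶ F ⋙ WD.Q`, whose component at `X` is
`F (q X)` up to the canonical isomorphism. It is invertible at each `Q X`, because
`q (Q X) : Q (Q X) ⟶ Q X` is a weak equivalence between objects of the subcategory on which `F`
preserves weak equivalences.

This invertibility already implies that `(LF, α)` is a left derived functor of `F ⋙ WD.Q`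
(`isLeftDerivedFunctor_of_deformation`): every `X` is isomorphic in the localization to `Q X`,
where a transformation to `F ⋙ WD.Q` lifts uniquely through `α`. Moreover the invertibility is
preserved by postcomposition with any functor, so `LF` is an absolute left derived functor;
dually `RG` is an absolute right derived functor of `G ⋙ WC.Q`. An adjunction between functors
having absolute derived functors passes to the derived functors (`Adjunction.derived`).
-/

open CategoryTheory

/-- If every `X` receives a natural weak equivalence from `Q X` and `α` is invertible at each
`Q X`, then `α` exhibits `LF` as a left derived functor: a transformation `β : L ⋙ M ⟶ H` lifts
by `M (L X) ≅ M (L (Q X)) ⟶ H (Q X) ≅ LF (L (Q X)) ⟶ LF (L X)`. -/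
lemma isLeftDerivedFunctor_of_deformation
    {C D E : Type*} [Category C] [Category D] [Category E] {L : C ⥤ D} (W : MorphismProperty C)
    [L.IsLocalization W] {H : C ⥤ E} {LF : D ⥤ E} (α : L ⋙ LF ⟶ H)
    {Q : C ⥤ C} (q : Q ⟶ 𝟭 C) (hq : ∀ X, W (q.app X))
    (hα : ∀ X, IsIso (α.app (Q.obj X))) :
    LF.IsLeftDerivedFunctor α W := by
  have hL (X : C) : IsIso (L.map (q.app X)) := Localization.inverts L W _ (hq X)
  have key (M : D ⥤ E) (β : L ⋙ M ⟶ H) :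
      ∃ γ : M ⟶ LF, ∀ X, γ.app (L.obj X) ≫ α.app X = β.app X := by
    let a : Q ⋙ L ⋙ LF ≅ Q ⋙ H :=
      NatIso.ofComponents (fun X => asIso (α.app (Q.obj X))) (fun f => α.naturality (Q.map f))
    let b : Q ⋙ L ⋙ M ≅ L ⋙ M :=
      NatIso.ofComponents (fun X => asIso (M.map (L.map (q.app X))))
        (fun f => (Functor.whiskerRight q (L ⋙ M)).naturality f)
    let c : L ⋙ M ⟶ L ⋙ LF :=
      b.inv ≫ Functor.whiskerLeft Q β ≫ a.inv ≫ Functor.whiskerRight q (L ⋙ LF)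
    obtain ⟨γ, hγ⟩ := (Localization.whiskeringLeftFunctor' L W E).map_surjective (X := M)
      (Y := LF) c
    refine ⟨γ, fun X => ?_⟩
    have h₁ := α.naturality (q.app X)
    have h₂ := β.naturality (q.app X)
    have h₃ : γ.app (L.obj X) = inv (M.map (L.map (q.app X))) ≫ β.app (Q.obj X) ≫
        inv (α.app (Q.obj X)) ≫ LF.map (L.map (q.app X)) := congr_app hγ X
    dsimp at h₁ h₂
    rw [h₃]
    simp only [Category.assoc]
    rw [h₁, IsIso.inv_hom_id_assoc, ← h₂, IsIso.inv_hom_id_assoc]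
  have uniq (M : D ⥤ E) (γ₁ γ₂ : M ⟶ LF)
      (h : ∀ X, γ₁.app (L.obj X) ≫ α.app X = γ₂.app (L.obj X) ≫ α.app X) : γ₁ = γ₂ := by
    refine Localization.natTrans_ext L W fun X => ?_
    have h₁ := γ₁.naturality (L.map (q.app X))
    have h₂ := γ₂.naturality (L.map (q.app X))
    dsimp at h₁ h₂
    rw [← cancel_epi (M.map (L.map (q.app X))), h₁, h₂,
      (cancel_mono (α.app (Q.obj X))).1 (h (Q.obj X))]
  choose γ hγ using key
  refine ⟨⟨⟨Limits.IsTerminal.ofUniqueHom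
    (fun M => CostructuredArrow.homMk (γ M.left M.hom) ?_) ?_⟩⟩⟩
  · ext X
    exact hγ M.left M.hom X
  · intro M m
    apply CostructuredArrow.hom_ext
    exact uniq _ _ _ fun X => (congr_app (CostructuredArrow.w m) X).trans (hγ M.left M.hom X).symm

/-- The dual of `isLeftDerivedFunctor_of_deformation`: a transformation `β : H ⟶ L ⋙ M` descends
by `RG (L X) ⟶ RG (L (R X)) ≅ H (R X) ⟶ M (L (R X)) ≅ M (L X)`. -/
lemma isRightDerivedFunctor_of_deformation
    {C D E : Type*} [Category C] [Category D] [Category E] {L : C ⥤ D} (W : MorphismProperty C)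
    [L.IsLocalization W] {H : C ⥤ E} {RG : D ⥤ E} (α : H ⟶ L ⋙ RG)
    {R : C ⥤ C} (r : 𝟭 C ⟶ R) (hr : ∀ X, W (r.app X))
    (hα : ∀ X, IsIso (α.app (R.obj X))) :
    RG.IsRightDerivedFunctor α W := by
  have hL (X : C) : IsIso (L.map (r.app X)) := Localization.inverts L W _ (hr X)
  have key (M : D ⥤ E) (β : H ⟶ L ⋙ M) :
      ∃ γ : RG ⟶ M, ∀ X, α.app X ≫ γ.app (L.obj X) = β.app X := by
    let a : R ⋙ H ≅ R ⋙ L ⋙ RG :=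
      NatIso.ofComponents (fun X => asIso (α.app (R.obj X))) (fun f => α.naturality (R.map f))
    let b : L ⋙ M ≅ R ⋙ L ⋙ M :=
      NatIso.ofComponents (fun X => asIso (M.map (L.map (r.app X))))
        (fun f => (Functor.whiskerRight r (L ⋙ M)).naturality f)
    let c : L ⋙ RG ⟶ L ⋙ M :=
      Functor.whiskerRight r (L ⋙ RG) ≫ a.inv ≫ Functor.whiskerLeft R β ≫ b.inv
    obtain ⟨γ, hγ⟩ := (Localization.whiskeringLeftFunctor' L W E).map_surjective (X := RG)
      (Y := M) c
    refine ⟨γ, fun X => ?_⟩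
    have h₁ := α.naturality (r.app X)
    have h₂ := β.naturality (r.app X)
    have h₃ : γ.app (L.obj X) = RG.map (L.map (r.app X)) ≫ inv (α.app (R.obj X)) ≫
        β.app (R.obj X) ≫ inv (M.map (L.map (r.app X))) := congr_app hγ X
    dsimp at h₁ h₂
    rw [h₃, ← reassoc_of% h₁, IsIso.hom_inv_id_assoc, reassoc_of% h₂, IsIso.hom_inv_id,
      Category.comp_id]
  have uniq (M : D ⥤ E) (γ₁ γ₂ : RG ⟶ M)
      (h : ∀ X, α.app X ≫ γ₁.app (L.obj X) = α.app X ≫ γ₂.app (L.obj X)) : γ₁ = γ₂ := by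
    refine Localization.natTrans_ext L W fun X => ?_
    rw [← cancel_mono (M.map (L.map (r.app X))), ← γ₁.naturality, ← γ₂.naturality,
      (cancel_epi (α.app (R.obj X))).1 (h (R.obj X))]
  choose γ hγ using key
  refine ⟨⟨⟨Limits.IsInitial.ofUniqueHom
    (fun M => StructuredArrow.homMk (γ M.right M.hom) ?_) ?_⟩⟩⟩
  · ext X
    exact hγ M.right M.hom X
  · intro M m
    apply StructuredArrow.hom_ext
    exact uniq _ _ _ fun X => (congr_app (StructuredArrow.w m) X).trans (hγ M.right M.hom X).symm

/-- **Statement 13.** Derived adjunction of a deformable adjunction: if `F ⊣ G`, `F` is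
left deformable via `(PC, Q, q)` and `G` is right deformable via `(PD, R, r)`, then
`F ∘ Q` sends `W_C` into `W_D` and `G ∘ R` sends `W_D` into `W_C`, so they induce
functors `LF` and `RG` on the localizations, and there is an adjunction `LF ⊣ RG`. -/
theorem derived_adjunction_of_deformable_adjunction
    {C D : Type*} [Category C] [Category D]
    (WC : MorphismProperty C) (WD : MorphismProperty D)
    [WC.ContainsIdentities] [WC.HasTwoOutOfThreeProperty]
    [WD.ContainsIdentities] [WD.HasTwoOutOfThreeProperty]
    (F : C ⥤ D) (G : D ⥤ C) (adj : F ⊣ G)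
    -- F is left deformable
    (PC : C → Prop) (Q : C ⥤ C) (hQ : ∀ X, PC (Q.obj X))
    (q : Q ⟶ 𝟭 C) (hq : ∀ X, WC (q.app X))
    (hF : ∀ ⦃X Y : C⦄ (f : X ⟶ Y), PC X → PC Y → WC f → WD (F.map f))
    -- G is right deformable
    (PD : D → Prop) (R : D ⥤ D) (hR : ∀ X, PD (R.obj X))
    (r : 𝟭 D ⟶ R) (hr : ∀ X, WD (r.app X))
    (hG : ∀ ⦃X Y : D⦄ (f : X ⟶ Y), PD X → PD Y → WD f → WC (G.map f)) :
    ∃ (h₁ : ∀ ⦃X Y : C⦄ (f : X ⟶ Y), WC f → WD (F.map (Q.map f)))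
      (h₂ : ∀ ⦃X Y : D⦄ (f : X ⟶ Y), WD f → WC (G.map (R.map f))),
      Nonempty
        (Localization.lift (Q ⋙ F ⋙ WD.Q)
            (fun _ _ f hf => Localization.inverts WD.Q WD _ (h₁ f hf)) WC.Q ⊣
          Localization.lift (R ⋙ G ⋙ WC.Q)
            (fun _ _ f hf => Localization.inverts WC.Q WC _ (h₂ f hf)) WD.Q) := by
  have h₁ : ∀ ⦃X Y : C⦄ (f : X ⟶ Y), WC f → WD (F.map (Q.map f)) := fun X Y f hf => by
    refine hF _ (hQ X) (hQ Y) (WC.of_postcomp _ (q.app Y) (hq Y) ?_)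
    rw [q.naturality]
    exact WC.comp_mem _ _ (hq X) hf
  have h₂ : ∀ ⦃X Y : D⦄ (f : X ⟶ Y), WD f → WC (G.map (R.map f)) := fun X Y f hf => by
    refine hG _ (hR X) (hR Y) (WD.of_precomp (r.app X) _ (hr X) ?_)
    rw [← r.naturality]
    exact WD.comp_mem _ _ hf (hr Y)
  refine ⟨h₁, h₂, ?_⟩
  have i₁ : WC.IsInvertedBy (Q ⋙ F ⋙ WD.Q) :=
    fun _ _ f hf => Localization.inverts WD.Q WD _ (h₁ f hf)
  have i₂ : WD.IsInvertedBy (R ⋙ G ⋙ WC.Q) :=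
    fun _ _ f hf => Localization.inverts WC.Q WC _ (h₂ f hf)
  change Nonempty (Localization.lift _ i₁ WC.Q ⊣ Localization.lift _ i₂ WD.Q)
  let α : WC.Q ⋙ Localization.lift _ i₁ WC.Q ⟶ F ⋙ WD.Q :=
    (Localization.fac _ i₁ WC.Q).hom ≫ Functor.whiskerRight q (F ⋙ WD.Q)
  let β : G ⋙ WC.Q ⟶ WD.Q ⋙ Localization.lift _ i₂ WD.Q :=
    Functor.whiskerRight r (G ⋙ WC.Q) ≫ (Localization.fac _ i₂ WD.Q).inv
  have hα (X : C) : IsIso (α.app (Q.obj X)) := by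
    have : IsIso ((Functor.whiskerRight q (F ⋙ WD.Q)).app (Q.obj X)) :=
      Localization.inverts WD.Q WD _ (hF _ (hQ _) (hQ _) (hq (Q.obj X)))
    exact IsIso.comp_isIso
  have hβ (X : D) : IsIso (β.app (R.obj X)) := by
    have : IsIso ((Functor.whiskerRight r (G ⋙ WC.Q)).app (R.obj X)) :=
      Localization.inverts WC.Q WC _ (hG _ (hR _) (hR _) (hr (R.obj X)))
    exact IsIso.comp_isIso
  have := isLeftDerivedFunctor_of_deformation WC α q hq hα
  have := isRightDerivedFunctor_of_deformation WD β r hr hβ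
  have := isLeftDerivedFunctor_of_deformation WC
    ((Functor.associator _ _ _).inv ≫ Functor.whiskerRight α (Localization.lift _ i₂ WD.Q))
    q hq (fun X => by
      rw [NatTrans.comp_app, Functor.whiskerRight_app]
      infer_instance)
  have := isRightDerivedFunctor_of_deformation WD
    (Functor.whiskerRight β (Localization.lift _ i₁ WC.Q) ≫ (Functor.associator _ _ _).hom)
    r hr (fun X => by
      rw [NatTrans.comp_app, Functor.whiskerRight_app]
      infer_instance)
  exact ⟨adj.derived WC WD α β⟩
end
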